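/- arXiv:1908.04937 — 5 statements merged into one kernel-verified Lean document; each statement's English description precedes it below -/
import Mathlib

section
/- Let P[1..m] and S[1..m] be strings over a linearly ordered alphabet, let 0 ≤ q < m, and assume that PP_P(i) = PP_S(i) for all 1 ≤ i ≤ q. Then PP_P(q+1) = PP_S(q+1) (equivalently, P[1..q+1] and S[1..q+1] have the same prefix-parent representations) if and only if S[PP_P(q+1)] ⪯ S[q+1] and S[q+1] ⪯ S[PC_P(q+1)]. (Theorem 1 of the paper.) -/
/-!
The prefix parent of `i` is characterized by order conditions: `PP S i = i` iff `i` is `≺`-below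
every earlier position (`PP_eq_self_iff`), and `PP S i = j < i` iff `j ≺ i` and `i` is `≺`-below
every position strictly between `j` and `i` (`PP_eq_iff_of_lt`). So, at `i = q` (counting from
`0`) and with `j = PP P q`, the equation `PP S q = j` says that `j ⪯ q` in `S` and that `q` is
`≺`-below each position of an interval `F` ending just before `q`. Being below all of `F` is the
same as being below its minimum position in `S`. When `F` is empty there is no such condition, and
`PC P q = q` makes `q ⪯ PC P q` vacuous too.

Otherwise it remains to see that this minimum is `PC P q`, which is the minimum of `F` for `P`. This is
`preceq_transfer`: a position `c` is the minimum of an interval iff the prefix parent of `c` is not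
an earlier position of the interval, and every later position of the interval has its prefix parent
strictly before it and not before `c`. That criterion only involves prefix parents of positions in
the interval, and these agree for `P` and `S`.
-/

namespace CTM

variable {α : Type*} [LinearOrder α] {n : ℕ}

/-- `S[i] ≺ S[j]`: strict order on positions, values compared first, ties broken
toward the smaller index. -/
def prec (S : Fin n → α) (i j : Fin n) : Prop :=
  S i < S j ∨ (S i = S j ∧ i < j)

instance (S : Fin n → α) (i j : Fin n) : Decidable (prec S i j) :=
  inferInstanceAs (Decidable (_ ∨ _))

/-- `S[i] ⪯ S[j]`. -/
def preceq (S : Fin n → α) (i j : Fin n) : Prop :=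
  i = j ∨ prec S i j

/-- The set `{j : j < i and S[j] ≺ S[i]}`. -/
def PPset (S : Fin n → α) (i : Fin n) : Finset (Fin n) :=
  Finset.univ.filter (fun j => j < i ∧ prec S j i)

/-- Prefix-parent representation. -/
def PP (S : Fin n → α) (i : Fin n) : Fin n :=
  if h : (PPset S i).Nonempty then (PPset S i).max' h else i

lemma PP_le (S : Fin n → α) (i : Fin n) : PP S i ≤ i := by
  unfold PP
  split
  · next h =>
      have hm := (PPset S i).max'_mem h
      simp only [PPset, Finset.mem_filter] at hm
      exact le_of_lt hm.2.1
  · exact le_refl i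

/-- The ≺-minimum position of a nonempty finite set of positions. -/
noncomputable def minPos (S : Fin n → α) (F : Finset (Fin n)) (h : F.Nonempty) : Fin n :=
  (F.exists_min_image (fun j => toLex (S j, j)) h).choose

lemma minPos_mem (S : Fin n → α) (F : Finset (Fin n)) (h : F.Nonempty) :
    minPos S F h ∈ F :=
  (F.exists_min_image (fun j => toLex (S j, j)) h).choose_spec.1

/-- Prefix-child representation (0-indexed: position `0` is the first position). -/
noncomputable def PC (S : Fin n → α) (i : Fin n) : Fin n :=
  if h0 : i.val = 0 then i
  else if h1 : PP S i = i then
    minPos S (Finset.univ.filter (fun j => j < i))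
      ⟨⟨0, i.pos⟩, Finset.mem_filter.mpr ⟨Finset.mem_univ _, by
        simp only [Fin.lt_def]; omega⟩⟩
  else if _h2 : (PP S i).val + 1 = i.val then i
  else
    minPos S (Finset.univ.filter (fun j => PP S i < j ∧ j < i))
      ⟨⟨(PP S i).val + 1, by
          have h3 : (PP S i).val < i.val := Fin.lt_def.mp (lt_of_le_of_ne (PP_le S i) h1)
          have h4 := i.isLt
          omega⟩,
        Finset.mem_filter.mpr ⟨Finset.mem_univ _, by
          have h3 : (PP S i).val < i.val := Fin.lt_def.mp (lt_of_le_of_ne (PP_le S i) h1)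
          constructor <;> simp only [Fin.lt_def] <;> omega⟩⟩

/-- Global-parent representation. -/
noncomputable def GP (S : Fin n → α) (i : Fin n) : Fin n :=
  if h : ∃ j, i < j ∧ PC S j = i then h.choose else PP S i

/-- Binary trees whose nodes are positions of a string of length `n`. -/
inductive PosTree (n : ℕ) where
  | nil : PosTree n
  | node : Fin n → PosTree n → PosTree n → PosTree n

/-- The Cartesian tree of the restriction of `S` to a finite set of positions. -/
noncomputable def CTAux (S : Fin n → α) (F : Finset (Fin n)) : PosTree n :=
  if h : F.Nonempty then
    PosTree.node (minPos S F h)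
      (CTAux S (F.filter (fun j => j < minPos S F h)))
      (CTAux S (F.filter (fun j => minPos S F h < j)))
  else PosTree.nil
termination_by F.card
decreasing_by
  · exact Finset.card_lt_card
      (Finset.filter_ssubset.mpr ⟨minPos S F h, minPos_mem S F h, by simp⟩)
  · exact Finset.card_lt_card
      (Finset.filter_ssubset.mpr ⟨minPos S F h, minPos_mem S F h, by simp⟩)

/-- The Cartesian tree of a string, as a binary tree on positions. -/
noncomputable def CT (S : Fin n → α) : PosTree n :=
  CTAux S Finset.univ

/-- Parent-distance representation. -/
def PD (S : Fin n → α) (i : Fin n) : ℕ :=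
  if h : (PPset S i).Nonempty then i.val - ((PPset S i).max' h).val else 0


lemma prec_trans {S : Fin n → α} {i j k : Fin n} (hij : prec S i j) (hjk : prec S j k) :
    prec S i k := by
  rcases hij with h | ⟨h, h'⟩ <;> rcases hjk with g | ⟨g, g'⟩
  · exact Or.inl (h.trans g)
  · exact Or.inl (g ▸ h)
  · exact Or.inl (h ▸ g)
  · exact Or.inr ⟨h.trans g, h'.trans g'⟩

lemma prec_irrefl (S : Fin n → α) (i : Fin n) : ¬ prec S i i := by
  simp [prec]

lemma prec_asymm {S : Fin n → α} {i j : Fin n} (h : prec S i j) : ¬ prec S j i :=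
  fun h' => prec_irrefl S i (prec_trans h h')

lemma prec_of_not_prec {S : Fin n → α} {i j : Fin n} (hne : i ≠ j) (h : ¬ prec S i j) :
    prec S j i := by
  simp only [prec, not_or, not_and, not_lt] at h ⊢
  rcases lt_or_eq_of_le h.1 with h1 | h1
  · exact Or.inl h1
  · exact Or.inr ⟨h1, lt_of_le_of_ne (h.2 h1.symm) hne.symm⟩

lemma prec_of_prec_of_preceq {S : Fin n → α} {i j k : Fin n} (hij : prec S i j)
    (hjk : preceq S j k) : prec S i k := by
  rcases hjk with rfl | hjk
  · exact hij
  · exact prec_trans hij hjk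

lemma prec_of_preceq_of_prec {S : Fin n → α} {i j k : Fin n} (hij : preceq S i j)
    (hjk : prec S j k) : prec S i k := by
  rcases hij with rfl | hij
  · exact hjk
  · exact prec_trans hij hjk

lemma prec_of_preceq_of_ne {S : Fin n → α} {i j : Fin n} (h : preceq S i j) (hne : i ≠ j) :
    prec S i j :=
  h.resolve_left hne

lemma minPos_preceq (S : Fin n → α) (F : Finset (Fin n)) (h : F.Nonempty) {k : Fin n}
    (hk : k ∈ F) : preceq S (minPos S F h) k := by
  have hle := (F.exists_min_image (fun j => toLex (S j, j)) h).choose_spec.2 k hk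
  change toLex (S (minPos S F h), minPos S F h) ≤ toLex (S k, k) at hle
  rw [Prod.Lex.toLex_le_toLex] at hle
  rcases hle with h1 | ⟨h1, h2⟩
  · exact Or.inr (Or.inl h1)
  · rcases eq_or_lt_of_le h2 with h3 | h3
    · exact Or.inl h3
    · exact Or.inr (Or.inr ⟨h1, h3⟩)

lemma le_PP_of_prec {S : Fin n → α} {i k : Fin n} (hki : k < i) (h : prec S k i) :
    k ≤ PP S i := by
  have hk : k ∈ PPset S i := by simp [PPset, hki, h]
  rw [PP, dif_pos ⟨k, hk⟩]
  exact Finset.le_max' _ _ hk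

lemma PP_mem_of_prec {S : Fin n → α} {i k : Fin n} (hki : k < i) (h : prec S k i) :
    PP S i < i ∧ prec S (PP S i) i := by
  have hk : k ∈ PPset S i := by simp [PPset, hki, h]
  have hm := (PPset S i).max'_mem ⟨k, hk⟩
  rw [PP, dif_pos ⟨k, hk⟩]
  simpa [PPset] using hm

lemma PP_eq_self_iff {S : Fin n → α} {i : Fin n} :
    PP S i = i ↔ ∀ k, k < i → prec S i k := by
  constructor
  · intro h k hk
    refine prec_of_not_prec hk.ne fun hp => ?_
    exact (PP_mem_of_prec hk hp).1.ne h
  · intro h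
    have he : ¬ (PPset S i).Nonempty := by
      rintro ⟨k, hk⟩
      simp only [PPset, Finset.mem_filter, Finset.mem_univ, true_and] at hk
      exact prec_asymm hk.2 (h k hk.1)
    rw [PP, dif_neg he]

lemma PP_eq_iff_of_lt {S : Fin n → α} {i j : Fin n} (hji : j < i) :
    PP S i = j ↔ prec S j i ∧ ∀ k, j < k → k < i → prec S i k := by
  constructor
  · rintro rfl
    refine ⟨?_, fun k hk hki => prec_of_not_prec hki.ne fun hp =>
      absurd (le_PP_of_prec hki hp) (not_le.mpr hk)⟩
    by_contra hn
    refine hji.ne (PP_eq_self_iff.mpr fun k hk => prec_of_not_prec hk.ne fun hp => ?_)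
    exact hn (PP_mem_of_prec hk hp).2
  · rintro ⟨h, hk⟩
    refine le_antisymm (not_lt.mp fun hlt => ?_) (le_PP_of_prec hji h)
    obtain ⟨h1, h2⟩ := PP_mem_of_prec hji h
    exact prec_asymm h2 (hk _ hlt h1)

/-- The position of the minimum of an interval of positions can be read off the prefix parents
inside the interval, so two strings with the same prefix parents there have the same minimum
position. -/
lemma preceq_transfer {P S : Fin n → α} {F : Set (Fin n)} [F.OrdConnected]
    (hpp : ∀ i ∈ F, PP P i = PP S i) {c : Fin n} (hc : c ∈ F)
    (hmin : ∀ k ∈ F, preceq P c k) : ∀ k ∈ F, preceq S c k := by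
  have hord : F.OrdConnected := inferInstance
  intro k
  induction k using WellFoundedLT.induction with
  | ind k ih =>
    intro hk
    rcases lt_trichotomy k c with hkc | rfl | hck
    · -- A position of `F` before `c` cannot be `≺`-below `c` in `S`: the prefix parent of `c`
      -- would then lie in `F`, and in `P` it would be `≺`-below the minimum `c`.
      refine Or.inr (prec_of_not_prec hkc.ne fun hp => ?_)
      have hle := le_PP_of_prec hkc hp
      obtain ⟨hlt, -⟩ := PP_mem_of_prec hkc hp
      have hP := ((PP_eq_iff_of_lt hlt).mp (hpp c hc)).1
      have hF : PP S c ∈ F := hord.out hk hc ⟨hle, hlt.le⟩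
      exact prec_irrefl P c (prec_of_preceq_of_prec (hmin _ hF) hP)
    · exact Or.inl rfl
    · -- After `c`, following prefix parents never jumps over `c`, so induction applies.
      have hp := prec_of_preceq_of_ne (hmin k hk) hck.ne
      have hle := le_PP_of_prec hck hp
      obtain ⟨hlt, -⟩ := PP_mem_of_prec hck hp
      rw [hpp k hk] at hle hlt
      have hS := ((PP_eq_iff_of_lt hlt).mp rfl).1
      exact Or.inr (prec_of_preceq_of_prec (ih _ hlt (hord.out hc hk ⟨hle, hlt.le⟩)) hS)

/-- For an interval of positions before `i` on which `P` and `S` have the same prefix parents,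
`i` is `≺`-below the whole interval in `S` iff it is `⪯` in `S` to the minimum position taken
from `P`. -/
lemma forall_prec_iff_preceq_minPos {P S : Fin n → α} {F : Finset (Fin n)}
    (hord : (F : Set (Fin n)).OrdConnected) (hF : F.Nonempty)
    (hpp : ∀ i ∈ F, PP P i = PP S i) {i : Fin n} (hi : i ∉ F) :
    (∀ k ∈ F, prec S i k) ↔ preceq S i (minPos P F hF) := by
  have hmem := minPos_mem P F hF
  refine ⟨fun h => Or.inr (h _ hmem), fun h k hk => ?_⟩
  have hlt : prec S i (minPos P F hF) :=
    prec_of_preceq_of_ne h fun he => hi (he ▸ hmem)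
  exact prec_of_prec_of_preceq hlt
    (preceq_transfer (F := (F : Set (Fin n))) hpp hmem
      (fun j hj => minPos_preceq P F hF hj) k hk)

/-- **Theorem 1 of the paper.**  If `P[1..q]` and `S[1..q]` have the same prefix-parent
representations, then `P[1..q+1]` and `S[1..q+1]` have the same prefix-parent representations
(equivalently `PP_P(q+1) = PP_S(q+1)`) iff `S[PP_P(q+1)] ⪯ S[q+1] ⪯ S[PC_P(q+1)]`. -/
theorem prefix_parent_extension (m : ℕ) (P S : Fin m → α) (q : ℕ) (hq : q < m)
    (hpp : ∀ i : Fin m, i.val < q → PP P i = PP S i) :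
    PP P ⟨q, hq⟩ = PP S ⟨q, hq⟩ ↔
      (preceq S (PP P ⟨q, hq⟩) ⟨q, hq⟩ ∧ preceq S ⟨q, hq⟩ (PC P ⟨q, hq⟩)) := by
  set i : Fin m := ⟨q, hq⟩
  have hpp' : ∀ k, k < i → PP P k = PP S k := fun k hk => hpp k hk
  rw [eq_comm]
  unfold PC
  split_ifs with h0 h1 h2
  · have hno : ∀ k, ¬ k < i := fun k hk => by
      have := Fin.lt_def.mp hk
      omega
    have hP : PP P i = i := PP_eq_self_iff.mpr fun k hk => absurd hk (hno k)
    have hS : PP S i = i := PP_eq_self_iff.mpr fun k hk => absurd hk (hno k)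
    rw [hP, hS]
    exact iff_of_true rfl ⟨Or.inl rfl, Or.inl rfl⟩
  · rw [h1, PP_eq_self_iff]
    refine Iff.trans ?_ (and_congr_right fun _ =>
      forall_prec_iff_preceq_minPos (P := P) (S := S) (i := i) ?_ _ ?_ ?_)
    · simp [preceq]
    · simpa [Set.Iio_def] using (inferInstance : (Set.Iio i).OrdConnected)
    · simpa using hpp'
    · simp
  · have hlt : PP P i < i := lt_of_le_of_ne (PP_le P i) h1
    rw [PP_eq_iff_of_lt hlt]
    have hno : ∀ k, PP P i < k → k < i → prec S i k := fun k hk hk' => by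
      have := Fin.lt_def.mp hk
      have := Fin.lt_def.mp hk'
      omega
    exact ⟨fun h => ⟨Or.inr h.1, Or.inl rfl⟩, fun h => ⟨prec_of_preceq_of_ne h.1 h1, hno⟩⟩
  · have hlt : PP P i < i := lt_of_le_of_ne (PP_le P i) h1
    rw [PP_eq_iff_of_lt hlt]
    refine Iff.trans ?_ (and_congr_right fun _ =>
      forall_prec_iff_preceq_minPos (P := P) (S := S) (i := i) ?_ _ ?_ ?_)
    · simp [preceq, h1]
    · simpa [Set.Ioo_def] using (inferInstance : (Set.Ioo (PP P i) i).OrdConnected)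
    · simpa using fun k _ hk => hpp' k hk
    · simp

end CTM
end

section
/- Let P be a string of length m and T a string of length n over a linearly ordered alphabet, with 1 ≤ i ≤ n−m+1. If CT(P[1..m]) = CT(T[i..i+m−1]), then β_P[j] = β_T[i+j−1] for all 1 ≤ j ≤ m−1. (Theorem 2 of the paper: the binary representation is a valid filtration for Cartesian tree matching.) -/
/-!
The bit at `j` only says whether `S j ≤ S (j + 1)` (`PP_eq_pred_iff`), so it does not depend on
the part of the text to the left of the window. This comparison can be read off the Cartesian
tree (`le_iff_of_CTAux_eq`): of two adjacent positions one is an ancestor of the other, and the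
ancestor is the `≺`-smaller one.
-/

namespace CTM

variable {α : Type*} [LinearOrder α] {n : ℕ}

/-- Between adjacent positions, the bit only records whether the value does not drop. -/
lemma PP_eq_pred_iff (S : Fin n → α) {a b : Fin n} (hab : a.val + 1 = b.val) :
    PP S b = a ↔ S a ≤ S b := by
  have hlt : a < b := by rw [Fin.lt_def]; omega
  constructor
  · intro h
    unfold PP at h
    split at h
    · next hne =>
        have hm := (PPset S b).max'_mem hne
        rw [h] at hm
        simp only [PPset, Finset.mem_filter] at hm
        rcases hm.2.2 with h1 | h1
        · exact h1.le
        · exact h1.1.le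
    · exact absurd h hlt.ne'
  · intro h
    have ha : a ∈ PPset S b := by
      simp only [PPset, Finset.mem_filter, Finset.mem_univ, true_and]
      refine ⟨hlt, ?_⟩
      rcases h.lt_or_eq with h1 | h1
      · exact Or.inl h1
      · exact Or.inr ⟨h1, hlt⟩
    have hne : (PPset S b).Nonempty := ⟨a, ha⟩
    unfold PP
    rw [dif_pos hne]
    refine le_antisymm ?_ (Finset.le_max' _ _ ha)
    have hm := (PPset S b).max'_mem hne
    simp only [PPset, Finset.mem_filter] at hm
    have hm' := Fin.lt_def.mp hm.2.1
    rw [Fin.le_def]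
    simp only [PPset] at *
    omega

lemma minPos_le (S : Fin n → α) (F : Finset (Fin n)) (h : F.Nonempty) {x : Fin n}
    (hx : x ∈ F) : S (minPos S F h) < S x ∨ S (minPos S F h) = S x ∧ minPos S F h ≤ x :=
  Prod.Lex.toLex_le_toLex.mp
    ((F.exists_min_image (fun j => toLex (S j, j)) h).choose_spec.2 x hx)

/-- The Cartesian tree determines the comparison of adjacent entries: descend from the root
until it is one of the two positions; until then both lie in the same subtree. -/
lemma le_iff_of_CTAux_eq (S S' : Fin n → α) {a b : Fin n} (hab : a.val + 1 = b.val)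
    (F : Finset (Fin n)) (ha : a ∈ F) (hb : b ∈ F) (h : CTAux S F = CTAux S' F) :
    S a ≤ S b ↔ S' a ≤ S' b := by
  induction F using Finset.strongInduction with
  | H F ih =>
    have hF : F.Nonempty := ⟨a, ha⟩
    rw [CTAux, CTAux, dif_pos hF, dif_pos hF] at h
    injection h with h0 h1 h2
    have hka := minPos_le S F hF ha
    have hkb := minPos_le S F hF hb
    have hka' := minPos_le S' F hF ha
    have hkb' := minPos_le S' F hF hb
    have hk := minPos_mem S F hF
    rw [← h0] at hka' hkb' h1 h2
    generalize minPos S F hF = k at *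
    by_cases hak : k = a
    · subst hak
      exact iff_of_true (hkb.elim le_of_lt fun e => e.1.le)
        (hkb'.elim le_of_lt fun e => e.1.le)
    by_cases hbk : k = b
    · subst hbk
      -- A tie at a root on the right is impossible: ties are broken to the left.
      have hn : ¬ k ≤ a := by rw [Fin.le_def]; omega
      exact iff_of_false (not_le.mpr (hka.resolve_right fun e => hn e.2))
        (not_le.mpr (hka'.resolve_right fun e => hn e.2))
    rw [Fin.ext_iff] at hak hbk
    rcases lt_or_ge a k with hlt | hge
    · have hbk' : b < k := by rw [Fin.lt_def] at *; omega
      refine ih _ ?_ ?_ ?_ h1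
      · exact Finset.filter_ssubset.mpr ⟨k, hk, lt_irrefl k⟩
      · exact Finset.mem_filter.mpr ⟨ha, hlt⟩
      · exact Finset.mem_filter.mpr ⟨hb, hbk'⟩
    · have hka2 : k < a := by rw [Fin.lt_def]; rw [Fin.le_def] at hge; omega
      have hkb2 : k < b := by rw [Fin.lt_def] at *; omega
      refine ih _ ?_ ?_ ?_ h2
      · exact Finset.filter_ssubset.mpr ⟨k, hk, lt_irrefl k⟩
      · exact Finset.mem_filter.mpr ⟨ha, hka2⟩
      · exact Finset.mem_filter.mpr ⟨hb, hkb2⟩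

/-- **Theorem 2 of the paper.**  If `CT(P[1..m]) = CT(T[i..i+m-1])` then the binary
representations agree: `β_P[j] = β_T[i+j-1]` for `1 ≤ j ≤ m-1` (everything 0-indexed here,
`s` is the 0-indexed starting position of the window). -/
theorem binary_filtration (n m : ℕ) (T : Fin n → α) (P : Fin m → α) (s : ℕ)
    (hs : s + m ≤ n)
    (hct : CT P = CT (fun j : Fin m => T ⟨s + j.val, by have := j.isLt; omega⟩)) :
    ∀ j : ℕ, (hj : j + 1 < m) →
      ((PP P ⟨j + 1, hj⟩ = ⟨j, by omega⟩) ↔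
        (PP T ⟨s + j + 1, by omega⟩ = ⟨s + j, by omega⟩)) := by
  intro j hj
  rw [PP_eq_pred_iff P (a := ⟨j, by omega⟩) (b := ⟨j + 1, hj⟩) rfl,
    PP_eq_pred_iff T (a := ⟨s + j, by omega⟩) (b := ⟨s + j + 1, by omega⟩) rfl]
  exact le_iff_of_CTAux_eq P _ (a := ⟨j, by omega⟩) (b := ⟨j + 1, hj⟩) rfl Finset.univ
    (Finset.mem_univ _) (Finset.mem_univ _) hct

end CTM
end

section
/- Let P[1..m] and S[1..m] be strings over a linearly ordered alphabet. Then S[PP_P(i)] ⪯ S[i] and S[i] ⪯ S[PC_P(i)] hold for all 1 ≤ i ≤ m if and only if S[GP_P(i)] ⪯ S[i] holds for all 1 ≤ i ≤ m. (The equivalence established in the proof of Theorem 3.) -/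
/-!
The relation `≺` of a string is a strict linear order on positions. In these terms `PC P j = i`
with `i < j` says that `i` is the left child of `j` in the Cartesian tree of `P`: `i` is
the `≺`-minimum of the positions strictly between the prefix parent of `j` and `j`
(or of all positions before `j`, if `j` has no prefix parent), and `j ≺ i` (`PC_spec`, `prec_PC`).
A position is the left child of at most one position (`PC_inj`), so the global parent of `i` is
`j` whenever `i` is the left child of `j`.

The conditions on `PP` and `PC` imply those on `GP`, since `GP P i = j` forces `PC P j = i` or
`j = PP P i`. Conversely, the condition on `PC P i` is trivial if `PC P i = i` and otherwise is
the condition on `GP` at `PC P i`. If `i` is not a left child then `PP P i = GP P i`. If `i` is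
the left child of `j`, then `i` and `j` have the same prefix parent, or neither has one
(`PP_of_PC`), and `S[PP P j] ⪯ S[j] ⪯ S[i]` by induction on `i` from the right end of the string.
-/

namespace CTM

variable {α : Type*} [LinearOrder α] {n : ℕ}

lemma preceq_trans {S : Fin n → α} {i j k : Fin n}
    (h₁ : preceq S i j) (h₂ : preceq S j k) : preceq S i k := by
  unfold preceq prec at *
  grind

lemma not_prec_iff {S : Fin n → α} {i j : Fin n} :
    ¬ prec S i j ↔ preceq S j i := by
  unfold preceq prec
  grind

/-- `PP S i` is either the nearest `≺`-smaller position before `i`, or `i` itself when no position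
before `i` is `≺`-smaller. -/
lemma PP_spec (S : Fin n → α) (i : Fin n) :
    (PP S i < i ∧ prec S (PP S i) i ∧ ∀ k, PP S i < k → k < i → ¬ prec S k i) ∨
      (PP S i = i ∧ ∀ k, k < i → ¬ prec S k i) := by
  unfold PP
  split
  · next h =>
    left
    have hm := (PPset S i).max'_mem h
    simp only [PPset, Finset.mem_filter, Finset.mem_univ, true_and] at hm
    refine ⟨hm.1, hm.2, fun k hk hki hp => ?_⟩
    exact absurd ((PPset S i).le_max' k (by simp [PPset, hki, hp])) (not_le.mpr hk)
  · next h =>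
    refine Or.inr ⟨rfl, fun k hk hp => h ⟨k, by simp [PPset, hk, hp]⟩⟩

lemma PP_eq_of_lt {S : Fin n → α} {i p : Fin n}
    (hp : p < i) (h : prec S p i) (hmax : ∀ k, p < k → k < i → ¬ prec S k i) : PP S i = p := by
  rcases PP_spec S i with ⟨h1, h2, h3⟩ | ⟨h1, h3⟩
  · rcases lt_trichotomy (PP S i) p with hlt | heq | hgt
    · exact absurd h (h3 p hlt hp)
    · exact heq
    · exact absurd h2 (hmax _ hgt h1)
  · exact absurd h (h3 p hp)

lemma PP_eq_self {S : Fin n → α} {i : Fin n}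
    (hmin : ∀ k, k < i → ¬ prec S k i) : PP S i = i := by
  rcases PP_spec S i with ⟨h1, h2, _⟩ | ⟨h1, _⟩
  · exact absurd h2 (hmin _ h1)
  · exact h1

lemma PC_le (S : Fin n → α) (j : Fin n) : PC S j ≤ j := by
  unfold PC
  split_ifs
  · exact le_rfl
  · exact (Finset.mem_filter.mp (minPos_mem S (Finset.univ.filter (fun k => k < j)) _)).2.le
  · exact le_rfl
  · exact (Finset.mem_filter.mp
      (minPos_mem S (Finset.univ.filter (fun k => PP S j < k ∧ k < j)) _)).2.2.le

/-- A nontrivial prefix child of `j` is the `≺`-minimum of the positions between the prefix parent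
of `j` and `j`, where `PP S j = j` means that there is no prefix parent to stay above. -/
lemma PC_spec {S : Fin n → α} {j : Fin n}
    (h : PC S j < j) :
    (PP S j = j ∨ PP S j < PC S j) ∧
      ∀ k, k < j → (PP S j = j ∨ PP S j < k) → preceq S (PC S j) k := by
  unfold PC at h ⊢
  split_ifs at h ⊢ with h0 h1 h2
  · exact absurd h (lt_irrefl _)
  · exact ⟨Or.inl h1, fun k hk _ => minPos_preceq S _ _ (by simp [hk])⟩
  · exact absurd h (lt_irrefl _)
  · refine ⟨Or.inr ?_, fun k hk hpk => minPos_preceq S _ _ ?_⟩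
    · exact (Finset.mem_filter.mp
        (minPos_mem S (Finset.univ.filter (fun k => PP S j < k ∧ k < j)) _)).2.1
    · simp [hk, hpk.resolve_left h1]

lemma prec_PC {S : Fin n → α} {j : Fin n}
    (h : PC S j < j) : prec S j (PC S j) := by
  have hn : ¬ prec S (PC S j) j := by
    rcases PP_spec S j with ⟨h1, _, h3⟩ | ⟨_, h3⟩
    · exact h3 _ ((PC_spec h).1.resolve_left h1.ne) h
    · exact h3 _ h
  exact (not_prec_iff.mp hn).resolve_left h.ne'

/-- If `i` were the left child of two positions, the smaller one, say `j`, would lie in the range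
below the larger one, of which `i` is
the minimum, contradicting `j ≺ i`. -/
lemma PC_inj {S : Fin n → α} {j j' : Fin n}
    (h : PC S j < j) (h' : PC S j' < j') (he : PC S j = PC S j') : j = j' := by
  have key : ∀ {a b : Fin n}, PC S a < a → PC S b < b → PC S a = PC S b → ¬ a < b := by
    intro a b ha hb hab hlt
    obtain ⟨h1, h2⟩ := PC_spec hb
    have h3 := h2 a hlt (h1.imp_right fun h4 => h4.trans (hab ▸ ha))
    exact not_prec_iff.mpr h3 (hab ▸ prec_PC ha)
  exact le_antisymm (not_lt.mp (key h' h he.symm)) (not_lt.mp (key h h' he))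

/-- A left child has the same prefix parent as its parent; if the parent has none, neither does
the child. -/
lemma PP_of_PC {S : Fin n → α} {j : Fin n}
    (h : PC S j < j) : PP S (PC S j) = PC S j ∨ PP S (PC S j) = PP S j := by
  obtain ⟨hm, hmin⟩ := PC_spec h
  rcases PP_spec S j with ⟨h1, h2, _⟩ | ⟨h1, _⟩
  · have hlt := hm.resolve_left h1.ne
    refine Or.inr (PP_eq_of_lt hlt ?_ fun k hk hki => ?_)
    · exact (preceq_trans (Or.inr h2) (Or.inr (prec_PC h))).resolve_left hlt.ne
    · exact not_prec_iff.mpr (hmin k (hki.trans h) (Or.inr hk))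
  · exact Or.inl (PP_eq_self fun k hk =>
      not_prec_iff.mpr (hmin k (hk.trans h) (Or.inl h1)))

lemma GP_PC {S : Fin n → α} {j : Fin n}
    (h : PC S j < j) : GP S (PC S j) = j := by
  have hex : ∃ k, PC S j < k ∧ PC S k = PC S j := ⟨j, h, rfl⟩
  obtain ⟨h1, h2⟩ := hex.choose_spec
  rw [GP, dif_pos hex]
  exact PC_inj (by rwa [h2]) h h2

/-- The equivalence established in the proof of Theorem 3:
`S[PP_P(i)] ⪯ S[i] ⪯ S[PC_P(i)]` for all `i` iff `S[GP_P(i)] ⪯ S[i]` for all `i`. -/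
theorem pp_pc_iff_gp (m : ℕ) (P S : Fin m → α) :
    (∀ i : Fin m, preceq S (PP P i) i ∧ preceq S i (PC P i)) ↔
      (∀ i : Fin m, preceq S (GP P i) i) := by
  constructor
  · intro H i
    by_cases h : ∃ j, i < j ∧ PC P j = i
    · rw [GP, dif_pos h]
      have := (H h.choose).2
      rwa [h.choose_spec.2] at this
    · rw [GP, dif_neg h]
      exact (H i).1
  · intro H
    have hPC : ∀ i, preceq S i (PC P i) := by
      intro i
      rcases (PC_le P i).eq_or_lt with h | h
      · exact Or.inl h.symm
      · simpa only [GP_PC h] using H (PC P i)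
    refine fun i => ⟨?_, hPC i⟩
    induction i using WellFoundedGT.induction with
    | ind i ih =>
      by_cases h : ∃ j, i < j ∧ PC P j = i
      · obtain ⟨j, hj, rfl⟩ := h
        rcases PP_of_PC hj with h | h
        · exact Or.inl h
        · rw [h]
          exact preceq_trans (ih j hj) (hPC j)
      · have := H i
        rwa [GP, dif_neg h] at this

end CTM
end

section
/- Let P[1..m] be a string over a linearly ordered alphabet and let 2 ≤ j ≤ m. If PP_P(j) = j and PC_P(j) < j, then PP_P(PC_P(j)) = PC_P(j). (Sub-lemma in the proof of Theorem 3: if P[j] has no prefix-parent and P[PC_P(j)] is the minimum of P[1..j−1], then P[PC_P(j)] has no prefix-parent either.) -/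
namespace CTM

variable {α : Type*} [LinearOrder α] {n : ℕ}

/-- No position of `F` strictly precedes its `≺`-minimum. -/
lemma not_prec_minPos (S : Fin n → α) (F : Finset (Fin n)) (h : F.Nonempty) {k : Fin n}
    (hk : k ∈ F) : ¬ prec S k (minPos S F h) := by
  have hmin : toLex (S (minPos S F h), minPos S F h) ≤ toLex (S k, k) :=
    (F.exists_min_image (fun j => toLex (S j, j)) h).choose_spec.2 k hk
  intro hp
  have hlt : toLex (S k, k) < toLex (S (minPos S F h), minPos S F h) :=
    Prod.Lex.toLex_lt_toLex.mpr (by simpa only [prec] using hp)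
  exact hlt.not_ge hmin

/-- Sub-lemma in the proof of Theorem 3: if `PP_P(j) = j` and `PC_P(j) < j`
(for a non-first position `j`), then `PP_P(PC_P(j)) = PC_P(j)`. -/
theorem pp_of_pc_eq_self (m : ℕ) (P : Fin m → α) (j : Fin m) (hj : 0 < j.val)
    (h1 : PP P j = j) (h2 : PC P j < j) :
    PP P (PC P j) = PC P j := by
  -- `PC P j` is the `≺`-minimum of all positions before `j`, so no earlier position precedes it.
  have hempty : ¬ (PPset P (PC P j)).Nonempty := by
    rintro ⟨k, hk⟩
    obtain ⟨hlt, hp⟩ := (Finset.mem_filter.mp hk).2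
    have hkj : k < j := hlt.trans h2
    unfold PC at hp
    rw [dif_neg hj.ne', dif_pos h1] at hp
    exact not_prec_minPos P _ _ (Finset.mem_filter.mpr ⟨Finset.mem_univ k, hkj⟩) hp
  exact dif_neg hempty

end CTM
end

section
/- Let P[1..m] and S[1..m] be strings over linearly ordered alphabets and let 1 ≤ q ≤ m. If PP_P(i) = PP_S(i) for all 1 ≤ i ≤ q, then for all 1 ≤ a ≤ b ≤ q the ≺-minimum position of P[a..b] equals the ≺-minimum position of S[a..b]. (Equal prefix-parent representations determine all range-minimum positions; the instances with b = q, a = 1 and a = PP_P(q+1)+1 are used in the proof of Theorem 1.) -/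
/-!
For `j < i` the relation `S[j] ≺ S[i]` just says `S j ≤ S i`, so `PP S i` is the last earlier
position whose value is at most `S i` (and `i` if there is none). Whether `k` is the ≺-minimum
position of `S[a..b]` can therefore be read off from `PP S` on `[a, b]`:

* no `j ∈ [a, k)` has `S j ≤ S k` iff `PP S k < a` or `PP S k = k`;
* every `j ∈ (k, b]` has `S k ≤ S j` iff every such `j` has `k ≤ PP S j < j`. The backward
  implication follows the chain `j, PP S j, PP S (PP S j), …`, along which values do not
  increase and which descends to `k`.

This is `eq_minPos_Icc_iff`; since its right-hand side mentions only `PP` at positions `≤ b`,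
equal representations give equal minimum positions.
-/

namespace CTM

variable {α : Type*} [LinearOrder α] {n : ℕ}

lemma mem_PPset {S : Fin n → α} {i j : Fin n} : j ∈ PPset S i ↔ j < i ∧ S j ≤ S i := by
  simp only [PPset, Finset.mem_filter, Finset.mem_univ, true_and]
  unfold prec
  refine and_congr_right fun h => ?_
  rw [le_iff_lt_or_eq]
  tauto

lemma le_PP {S : Fin n → α} {i j : Fin n} (hj : j < i) (h : S j ≤ S i) :
    j ≤ PP S i ∧ PP S i < i := by
  have hm : j ∈ PPset S i := mem_PPset.2 ⟨hj, h⟩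
  have hne : (PPset S i).Nonempty := ⟨j, hm⟩
  rw [PP, dif_pos hne]
  exact ⟨Finset.le_max' _ _ hm, (mem_PPset.1 (Finset.max'_mem _ hne)).1⟩

lemma apply_PP_le (S : Fin n → α) (i : Fin n) : S (PP S i) ≤ S i := by
  unfold PP
  split_ifs with h
  · exact (mem_PPset.1 (Finset.max'_mem _ h)).2
  · exact le_rfl

lemma eq_minPos_iff {S : Fin n → α} {F : Finset (Fin n)} (h : F.Nonempty) {k : Fin n} :
    k = minPos S F h ↔ k ∈ F ∧ ∀ j ∈ F, toLex (S k, k) ≤ toLex (S j, j) := by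
  have hmin : ∀ j ∈ F, toLex (S (minPos S F h), minPos S F h) ≤ toLex (S j, j) :=
    (F.exists_min_image (fun j => toLex (S j, j)) h).choose_spec.2
  constructor
  · rintro rfl
    exact ⟨minPos_mem S F h, hmin⟩
  · rintro ⟨hk, hle⟩
    have := le_antisymm (hle _ (minPos_mem S F h)) (hmin k hk)
    exact congrArg (fun x => (ofLex x).2) this

/-- The ≺-minimum position of `S[a..b]` in terms of values: strictly smaller than everything
to its left, at most everything to its right. -/
lemma eq_minPos_Icc_iff_values {S : Fin n → α} {a b : Fin n} (hab : a ≤ b) {k : Fin n} :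
    k = minPos S (Finset.Icc a b) (Finset.nonempty_Icc.mpr hab) ↔
      (a ≤ k ∧ k ≤ b) ∧ (∀ j, a ≤ j → j < k → S k < S j) ∧
        ∀ j, k < j → j ≤ b → S k ≤ S j := by
  simp only [eq_minPos_iff, Finset.mem_Icc, Prod.Lex.toLex_le_toLex]
  refine and_congr_right fun hk => ⟨fun h => ⟨fun j haj hjk => ?_, fun j hkj hjb => ?_⟩, ?_⟩
  · exact (h j ⟨haj, hjk.le.trans hk.2⟩).resolve_right fun e => absurd e.2 (not_le.2 hjk)
  · exact (h j ⟨hk.1.trans hkj.le, hjb⟩).elim le_of_lt fun e => e.1.le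
  · rintro ⟨hl, hr⟩ j ⟨haj, hjb⟩
    rcases lt_trichotomy j k with hjk | rfl | hkj
    · exact Or.inl (hl j haj hjk)
    · exact Or.inr ⟨rfl, le_rfl⟩
    · exact (hr j hkj hjb).lt_or_eq.imp_right fun e => ⟨e, hkj.le⟩

lemma forall_left_lt_iff {S : Fin n → α} {a k : Fin n} :
    (∀ j, a ≤ j → j < k → S k < S j) ↔ PP S k < a ∨ PP S k = k := by
  constructor
  · intro h
    by_contra! hc
    exact absurd (h _ hc.1 (lt_of_le_of_ne (PP_le S k) hc.2)) (not_lt.2 (apply_PP_le S k))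
  · intro h j haj hjk
    by_contra! hc
    obtain ⟨h1, h2⟩ := le_PP hjk hc
    exact h.elim (fun h => absurd (haj.trans h1) (not_le.2 h)) h2.ne

lemma forall_right_le_iff {S : Fin n → α} {b k : Fin n} :
    (∀ j, k < j → j ≤ b → S k ≤ S j) ↔ ∀ j, k < j → j ≤ b → k ≤ PP S j ∧ PP S j < j := by
  constructor
  · exact fun h j hkj hjb => le_PP hkj (h j hkj hjb)
  · intro h j
    induction j using WellFoundedLT.induction with
    | ind j ih =>
      intro hkj hjb
      obtain ⟨h1, h2⟩ := h j hkj hjb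
      refine le_trans ?_ (apply_PP_le S j)
      rcases h1.eq_or_lt with e | hlt
      · rw [← e]
      · exact ih _ h2 hlt (h2.le.trans hjb)

/-- The ≺-minimum position of `S[a..b]` in terms of the prefix-parent representation alone. -/
lemma eq_minPos_Icc_iff {S : Fin n → α} {a b : Fin n} (hab : a ≤ b) {k : Fin n} :
    k = minPos S (Finset.Icc a b) (Finset.nonempty_Icc.mpr hab) ↔
      (a ≤ k ∧ k ≤ b) ∧ (PP S k < a ∨ PP S k = k) ∧
        ∀ j, k < j → j ≤ b → k ≤ PP S j ∧ PP S j < j := by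
  rw [eq_minPos_Icc_iff_values hab, forall_left_lt_iff, forall_right_le_iff]

/-- Equal prefix-parent representations on a prefix determine all range-minimum
positions inside that prefix (used in the proof of Theorem 1). -/
theorem range_min_determined {β : Type*} [LinearOrder β] (m : ℕ)
    (P : Fin m → α) (S : Fin m → β) (q : Fin m)
    (hpp : ∀ i ≤ q, PP P i = PP S i) :
    ∀ a b : Fin m, (hab : a ≤ b) → b ≤ q →
      minPos P (Finset.Icc a b) (Finset.nonempty_Icc.mpr hab)
        = minPos S (Finset.Icc a b) (Finset.nonempty_Icc.mpr hab) := by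
  intro a b hab hbq
  obtain ⟨hk, hl, hr⟩ := (eq_minPos_Icc_iff (S := P) hab).1 rfl
  refine (eq_minPos_Icc_iff hab).2 ⟨hk, ?_, fun j hkj hjb => ?_⟩
  · rwa [← hpp _ (hk.2.trans hbq)]
  · rw [← hpp j (hjb.trans hbq)]
    exact hr j hkj hjb

end CTM
end
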